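/- (Proposition 3.) The function D : ℝ → ℝ defined by D(t₂) = σ₂·φ((μ−t₂)/σ₂)·(1 − F₁) − σ₁·f₁·(1 − Φ((μ−t₂)/σ₂)) attains a strict global maximum at the unique point t₂⁺ = μ − σ₁·f₁/(1 − F₁); that is, D(t₂) < D(t₂⁺) for all t₂ ≠ t₂⁺. -/

import Mathlib

open Real

/-- Density of the standard normal distribution. -/
noncomputable def stdPdf (y : ℝ) : ℝ := (Real.sqrt (2 * Real.pi))⁻¹ * Real.exp (-(y ^ 2) / 2)

/-- Cumulative distribution function of the standard normal distribution. -/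
noncomputable def stdCdf (y : ℝ) : ℝ := ∫ x in Set.Iic y, stdPdf x

open MeasureTheory in
lemma stdPdf_eq : stdPdf = ProbabilityTheory.gaussianPDFReal 0 1 := by
  funext y
  simp [stdPdf, ProbabilityTheory.gaussianPDFReal]

lemma stdPdf_pos (y : ℝ) : 0 < stdPdf y := by
  unfold stdPdf; positivity

lemma stdPdf_integrable : MeasureTheory.Integrable stdPdf := by
  rw [stdPdf_eq]; exact ProbabilityTheory.integrable_gaussianPDFReal 0 1

lemma stdPdf_continuous : Continuous stdPdf := by
  unfold stdPdf; fun_prop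

lemma stdPdf_hasDerivAt (y : ℝ) : HasDerivAt stdPdf (-y * stdPdf y) y := by
  have h : HasDerivAt (fun y : ℝ => -(y ^ 2) / 2) (-y) y := by
    refine (((hasDerivAt_pow 2 y).neg).div_const 2).congr_deriv ?_
    norm_num
    ring
  have h2 := (h.exp).const_mul ((Real.sqrt (2 * Real.pi))⁻¹)
  refine HasDerivAt.congr_deriv (f := stdPdf) h2 ?_
  unfold stdPdf
  ring

lemma stdCdf_hasDerivAt (y : ℝ) : HasDerivAt stdCdf (stdPdf y) y := by
  have e : stdCdf = fun z => stdCdf 0 + ∫ x in (0:ℝ)..z, stdPdf x := by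
    funext z
    have := intervalIntegral.integral_Iic_sub_Iic (μ := MeasureTheory.volume) (f := stdPdf)
      (a := 0) (b := z) stdPdf_integrable.integrableOn stdPdf_integrable.integrableOn
    rw [← this]; unfold stdCdf; ring
  rw [e]
  exact (stdPdf_continuous.integral_hasStrictDerivAt 0 y).hasDerivAt.const_add _

lemma stdCdf_lt_one (y : ℝ) : stdCdf y < 1 := by
  have hm : StrictMono stdCdf := strictMono_of_deriv_pos (fun x => by
    rw [(stdCdf_hasDerivAt x).deriv]; exact stdPdf_pos x)
  have hle : stdCdf (y + 1) ≤ 1 := by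
    have h1 : ∫ x, stdPdf x = 1 := by
      rw [stdPdf_eq]; exact ProbabilityTheory.integral_gaussianPDFReal_eq_one 0 one_ne_zero
    rw [← h1]
    exact MeasureTheory.setIntegral_le_integral stdPdf_integrable
      (Filter.Eventually.of_forall fun x => (stdPdf_pos x).le)
  exact (hm (lt_add_one y)).trans_le hle

lemma aux_max (b c : ℝ) (hb : 0 < b) (y : ℝ) (hy : y ≠ c / b) :
    b * stdPdf y + c * stdCdf y < b * stdPdf (c / b) + c * stdCdf (c / b) := by
  have hd : ∀ z, HasDerivAt (fun z => b * stdPdf z + c * stdCdf z)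
      (stdPdf z * (c - b * z)) z := fun z => by
    refine (((stdPdf_hasDerivAt z).const_mul b).add
      ((stdCdf_hasDerivAt z).const_mul c)).congr_deriv ?_
    ring
  have hc : Continuous (fun z => b * stdPdf z + c * stdCdf z) :=
    continuous_iff_continuousAt.2 fun z => (hd z).continuousAt
  rcases lt_or_gt_of_ne hy with h | h
  · refine strictMonoOn_of_deriv_pos (convex_Iic (c / b)) hc.continuousOn ?_ h.le
      (Set.mem_Iic.2 le_rfl) h
    intro x hx
    rw [interior_Iic, Set.mem_Iio, lt_div_iff₀ hb] at hx
    rw [(hd x).deriv]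
    exact mul_pos (stdPdf_pos x) (by linarith)
  · refine strictAntiOn_of_deriv_neg (convex_Ici (c / b)) hc.continuousOn ?_
      (Set.mem_Ici.2 le_rfl) h.le h
    intro x hx
    rw [interior_Ici, Set.mem_Ioi, div_lt_iff₀ hb] at hx
    rw [(hd x).deriv]
    exact mul_neg_of_pos_of_neg (stdPdf_pos x) (by linarith)

/-- Proposition 3: under the unanimous rejection group rule, the expected advantage
`D(t₂) = σ₂·φ((μ−t₂)/σ₂)·(1 − F₁) − σ₁·f₁·(1 − Φ((μ−t₂)/σ₂))` of a Group 2 member over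
a Group 1 member attains a strict global maximum at the unique point
`t₂⁺ = μ − σ₁·f₁/(1 − F₁)`. -/
theorem advantage_max_unanimous_rejection
    (μ σ : ℝ) (hσ : 0 < σ) (g₁ g₂ : ℕ) (hg₁ : 1 ≤ g₁) (hg₂ : 1 ≤ g₂) (t₁ : ℝ)
    (σ₁ σ₂ : ℝ) (hσ₁ : σ₁ = σ / Real.sqrt g₁) (hσ₂ : σ₂ = σ / Real.sqrt g₂)
    (F₁ f₁ : ℝ) (hF₁ : F₁ = stdCdf ((μ - t₁) / σ₁)) (hf₁ : f₁ = stdPdf ((μ - t₁) / σ₁))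
    (D : ℝ → ℝ)
    (hD : D = fun t₂ => σ₂ * stdPdf ((μ - t₂) / σ₂) * (1 - F₁) -
      σ₁ * f₁ * (1 - stdCdf ((μ - t₂) / σ₂))) :
    ∀ t₂ : ℝ, t₂ ≠ μ - σ₁ * f₁ / (1 - F₁) → D t₂ < D (μ - σ₁ * f₁ / (1 - F₁)) := by
  intro t ht
  have hg : 0 < Real.sqrt g₂ := Real.sqrt_pos.2 (by exact_mod_cast hg₂)
  have hs : 0 < σ₂ := by rw [hσ₂]; exact div_pos hσ hg
  have ha : 0 < 1 - F₁ := by rw [hF₁]; linarith [stdCdf_lt_one ((μ - t₁) / σ₁)]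
  have key : (μ - (μ - σ₁ * f₁ / (1 - F₁))) / σ₂ = σ₁ * f₁ / (σ₂ * (1 - F₁)) := by
    rw [sub_sub_cancel, div_div, mul_comm (1 - F₁)]
  have hy : (μ - t) / σ₂ ≠ σ₁ * f₁ / (σ₂ * (1 - F₁)) := by
    rw [← key]
    intro h
    rw [div_left_inj' hs.ne'] at h
    exact ht (by linarith)
  have := aux_max (σ₂ * (1 - F₁)) (σ₁ * f₁) (mul_pos hs ha) _ hy
  subst hD
  simp only [key]
  linarith
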